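/- Let (a_1, ..., a_n) be a sequence of positive integers with M(a_1, ..., a_n) = Id (a solution of Problem I). Then a_i ≤ n − 5 for every index i. -/

import Mathlib

open Matrix

def elemMat (a : ℤ) : Matrix (Fin 2) (Fin 2) ℤ := !![a, -1; 1, 0]

/-- `M (a₁ :: ... :: aₙ)` is the product `E(aₙ) ⋯ E(a₁)` with the factor for `a₁` rightmost. -/
def M : List ℤ → Matrix (Fin 2) (Fin 2) ℤ
  | [] => 1
  | a :: t => M t * elemMat a

/-!
A sequence with all entries at least `2` has `M l 1 0 > 0`, so a nonempty sequence of positive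
integers with `M l = ±1` contains a `1`, and `M l = ±1` survives cyclic rotation. A `1` between two
entries `a, b ≥ 2` is removed by `a, 1, b ↦ a - 1, b - 1`, which keeps `M l` and lowers the
length and each affected entry by exactly one. Two adjacent ones are removed by
`a, 1, 1, c ↦ a + c - 1`, which changes the sign of `M l` and drops the length by three. Because of
this sign change the bound for `M l = 1` is proved together with its companion
`x ≤ l.length - 2` for `M l = -1`, by induction on the length. The loss of three between the two
bounds is the drop in length, and the induction ends at `[1, 1, 1]`, where `M l = -1`.
-/

open List

theorem exists_isRotated_cons_cons_cons {α : Type*} {l : List α} {x : α} (hx : x ∈ l)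
    (hl : 3 ≤ l.length) : ∃ a b s, l ~r a :: x :: b :: s := by
  obtain ⟨u, v, rfl⟩ := append_of_mem hx
  have hrot : u ++ x :: v ~r x :: (v ++ u) := isRotated_append
  rcases hvu : v ++ u with _ | ⟨b, t⟩
  · simp_all
  obtain rfl | ⟨s, a, rfl⟩ := eq_nil_or_concat' t
  · have := hrot.perm.length_eq
    simp_all
  · exact ⟨a, b, s, (hvu ▸ hrot).trans (isRotated_concat a (x :: b :: s))⟩

theorem det_elemMat (a : ℤ) : (elemMat a).det = 1 := by
  simp [elemMat]

theorem elemMat_mul_elemMat_one_mul_elemMat (a b : ℤ) :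
    elemMat b * elemMat 1 * elemMat a = elemMat (b - 1) * elemMat (a - 1) := by
  simp only [elemMat, mul_fin_two]
  ring_nf

theorem elemMat_mul_elemMat_zero_mul_elemMat (a b : ℤ) :
    elemMat b * elemMat 0 * elemMat a = -elemMat (a + b) := by
  ext i j
  fin_cases i <;> fin_cases j <;> simp [elemMat]
  ring

theorem M_append (s t : List ℤ) : M (s ++ t) = M t * M s := by
  induction s with
  | nil => simp [M]
  | cons a s ih => simp [M, ih, Matrix.mul_assoc]

theorem det_M (l : List ℤ) : (M l).det = 1 := by
  induction l with
  | nil => simp [M]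
  | cons a l ih => simp [M, ih, det_elemMat]

theorem M_eq_of_isRotated {l l' : List ℤ} {c : Matrix (Fin 2) (Fin 2) ℤ} (h : l ~r l')
    (hc : ∀ A, Commute A c) (hl : M l = c) : M l' = c := by
  obtain ⟨k, hk, rfl⟩ := isRotated_iff_mod.mp h
  rw [rotate_eq_drop_append_take hk, M_append]
  rw [← take_append_drop k l, M_append] at hl
  have hunit : IsUnit (M (l.drop k)) := by simp [isUnit_iff_isUnit_det, det_M]
  apply hunit.mul_left_cancel
  rw [← Matrix.mul_assoc, hl, (hc _).eq]

theorem M_cons_one_cons (a b : ℤ) (s : List ℤ) :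
    M (a :: 1 :: b :: s) = M ((a - 1) :: (b - 1) :: s) := by
  simp only [M, Matrix.mul_assoc, ← elemMat_mul_elemMat_one_mul_elemMat]

theorem M_cons_zero_cons (a b : ℤ) (s : List ℤ) : M (a :: 0 :: b :: s) = -M ((a + b) :: s) := by
  simp only [M, Matrix.mul_assoc, ← Matrix.mul_neg, ← elemMat_mul_elemMat_zero_mul_elemMat]

theorem M_cons_one_one_cons (a b : ℤ) (s : List ℤ) :
    M (a :: 1 :: 1 :: b :: s) = -M ((a + b - 1) :: s) := by
  rw [M_cons_one_cons, sub_self, M_cons_zero_cons, sub_add_eq_add_sub]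

theorem M_apply_one_zero_cons (a : ℤ) (l : List ℤ) :
    M (a :: l) 1 0 = a * M l 1 0 + M l 1 1 := by
  simp [M, elemMat, Matrix.mul_apply, mul_comm]

theorem M_apply_one_one_cons (a : ℤ) (l : List ℤ) : M (a :: l) 1 1 = -M l 1 0 := by
  simp [M, elemMat, Matrix.mul_apply]

theorem M_apply_one_zero_nonneg_and_add_pos_of_two_le {l : List ℤ} (h : ∀ x ∈ l, 2 ≤ x) :
    0 ≤ M l 1 0 ∧ 0 < M l 1 0 + M l 1 1 := by
  induction l with
  | nil => simp [M]
  | cons a l ih =>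
    obtain ⟨ha, hl⟩ := forall_mem_cons.mp h
    obtain ⟨hp, hpq⟩ := ih hl
    rw [M_apply_one_zero_cons, M_apply_one_one_cons]
    have hap : 2 * M l 1 0 ≤ a * M l 1 0 := mul_le_mul_of_nonneg_right ha hp
    constructor <;> linarith

theorem M_apply_one_zero_pos_of_two_le {l : List ℤ} (hl : l ≠ []) (h : ∀ x ∈ l, 2 ≤ x) :
    0 < M l 1 0 := by
  obtain ⟨a, t, rfl⟩ := exists_cons_of_ne_nil hl
  have hrow := (M_apply_one_zero_nonneg_and_add_pos_of_two_le h).2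
  have ht := (M_apply_one_zero_nonneg_and_add_pos_of_two_le (forall_mem_cons.mp h).2).1
  rw [M_apply_one_one_cons] at hrow
  linarith

theorem one_mem_of_M_apply_one_zero_nonpos {l : List ℤ} (hl : l ≠ []) (hpos : ∀ x ∈ l, 0 < x)
    (hM : M l 1 0 ≤ 0) : 1 ∈ l := by
  by_contra h1
  refine hM.not_gt (M_apply_one_zero_pos_of_two_le hl fun x hx => ?_)
  have hx1 : x ≠ 1 := ne_of_mem_of_not_mem hx h1
  have hx0 := hpos x hx
  lia

theorem three_le_length_of_M_apply_one_zero_nonpos {l : List ℤ} (hl : l ≠ [])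
    (hpos : ∀ x ∈ l, 0 < x) (hM : M l 1 0 ≤ 0) : 3 ≤ l.length := by
  match l with
  | [] => contradiction
  | [a] => simp [M, elemMat] at hM
  | [a, b] =>
    have hM_eq : M [a, b] 1 0 = a := by simp [M, elemMat]
    exact absurd (hpos a mem_cons_self) (hM_eq ▸ hM).not_gt
  | _ :: _ :: _ :: _ => simp

theorem exists_isRotated_cons_one_cons_or_cons_one_one {l : List ℤ} (hl : l ≠ [])
    (hpos : ∀ x ∈ l, 0 < x) (hM : M l 1 0 ≤ 0) :
    ∃ l', l ~r l' ∧
      ((∃ a b s, 1 < a ∧ 1 < b ∧ l' = a :: 1 :: b :: s) ∨ ∃ a s, l' = a :: 1 :: 1 :: s) := by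
  obtain ⟨a, b, s, hrot⟩ := exists_isRotated_cons_cons_cons
    (one_mem_of_M_apply_one_zero_nonpos hl hpos hM)
    (three_le_length_of_M_apply_one_zero_nonpos hl hpos hM)
  have ha : 0 < a := hpos a (hrot.mem_iff.mpr (by simp))
  have hb : 0 < b := hpos b (hrot.mem_iff.mpr (by simp))
  obtain rfl | ha1 : a = 1 ∨ 1 < a := by lia
  · obtain ⟨t, d, ht⟩ := (eq_nil_or_concat' (b :: s)).resolve_left (cons_ne_nil b s)
    rw [ht] at hrot
    exact ⟨d :: 1 :: 1 :: t, hrot.trans (isRotated_concat d (1 :: 1 :: t)), .inr ⟨d, t, rfl⟩⟩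
  obtain rfl | hb1 : b = 1 ∨ 1 < b := by lia
  · exact ⟨_, hrot, .inr ⟨a, s, rfl⟩⟩
  · exact ⟨_, hrot, .inl ⟨a, b, s, ha1, hb1, rfl⟩⟩

/-- The bound on the entries of solutions of `M l = 1`, together with the one for `M l = -1` that
the induction needs. Every other list satisfies it vacuously. -/
def EntryBound (l : List ℤ) : Prop :=
  (M l = 1 → ∀ x ∈ l, x ≤ (l.length : ℤ) - 5) ∧ (M l = -1 → ∀ x ∈ l, x ≤ (l.length : ℤ) - 2)

namespace EntryBound

theorem of_isRotated {l l' : List ℤ} (h : l ~r l') (hl' : EntryBound l') : EntryBound l := by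
  simp only [EntryBound, h.perm.length_eq, h.mem_iff]
  exact ⟨fun hM => hl'.1 (M_eq_of_isRotated h Commute.one_right hM),
    fun hM => hl'.2 (M_eq_of_isRotated h Commute.neg_one_right hM)⟩

theorem cons_one_one_nil (a : ℤ) : EntryBound [a, 1, 1] := by
  have hM : M [a, 1, 1] = !![-1, 0; a - 1, -1] := by
    rw [M_cons_one_cons]
    simp [M, elemMat]
  refine ⟨fun h => ?_, fun h => ?_⟩
  · have h11 := congrFun₂ h 1 1
    simp [hM] at h11
  · have h10 := congrFun₂ h 1 0
    obtain rfl : a = 1 := by simpa [hM, sub_eq_zero] using h10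
    simp

theorem cons_one_cons {a b : ℤ} {s : List ℤ} (ha : 0 < a)
    (h : EntryBound ((a - 1) :: (b - 1) :: s)) : EntryBound (a :: 1 :: b :: s) := by
  simp only [EntryBound, M_cons_one_cons, forall_mem_cons, length_cons] at h ⊢
  refine ⟨fun hM => ?_, fun hM => ?_⟩
  · obtain ⟨_, _, hs⟩ := h.1 hM
    exact ⟨by lia, by lia, by lia, fun x hx => by have := hs x hx; lia⟩
  · obtain ⟨_, _, hs⟩ := h.2 hM
    exact ⟨by lia, by lia, by lia, fun x hx => by have := hs x hx; lia⟩

theorem cons_one_one_cons {a b : ℤ} {s : List ℤ} (ha : 0 < a) (hb : 0 < b)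
    (h : EntryBound ((a + b - 1) :: s)) : EntryBound (a :: 1 :: 1 :: b :: s) := by
  simp only [EntryBound, M_cons_one_one_cons, neg_eq_iff_eq_neg, neg_neg, forall_mem_cons,
    length_cons] at h ⊢
  refine ⟨fun hM => ?_, fun hM => ?_⟩
  · obtain ⟨_, hs⟩ := h.2 hM
    exact ⟨by lia, by lia, by lia, by lia, fun x hx => by have := hs x hx; lia⟩
  · obtain ⟨_, hs⟩ := h.1 hM
    exact ⟨by lia, by lia, by lia, by lia, fun x hx => by have := hs x hx; lia⟩

end EntryBound

theorem entryBound_of_pos (l : List ℤ) (hpos : ∀ x ∈ l, 0 < x) : EntryBound l := by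
  induction hn : l.length using Nat.strong_induction_on generalizing l with
  | _ n ih =>
  obtain rfl | hl := eq_or_ne l []
  · simp [EntryBound]
  obtain hM | hM := lt_or_ge 0 (M l 1 0)
  · constructor <;> intro h <;> simp [h] at hM
  obtain ⟨l', hrot, hl'⟩ := exists_isRotated_cons_one_cons_or_cons_one_one hl hpos hM
  rw [hrot.perm.length_eq] at hn
  simp only [hrot.mem_iff] at hpos
  refine .of_isRotated hrot ?_
  obtain ⟨a, b, s, ha, hb, rfl⟩ | ⟨a, _ | ⟨b, s⟩, rfl⟩ := hl' <;>
    simp only [forall_mem_cons, length_cons] at hpos hn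
  · obtain ⟨-, -, -, hs⟩ := hpos
    have hpos' : ∀ x ∈ (a - 1) :: (b - 1) :: s, 0 < x := by
      simp only [forall_mem_cons]
      exact ⟨by lia, by lia, hs⟩
    exact .cons_one_cons (by lia) (ih _ (by simp [← hn]) _ hpos' rfl)
  · exact .cons_one_one_nil a
  · obtain ⟨ha, -, -, hb, hs⟩ := hpos
    have hpos' : ∀ x ∈ (a + b - 1) :: s, 0 < x := forall_mem_cons.mpr ⟨by lia, hs⟩
    exact .cons_one_one_cons ha hb (ih _ (by simp [← hn]) _ hpos' rfl)

/-- For a solution of Problem I, every entry satisfies `aᵢ ≤ n - 5`. -/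
theorem problemI_entry_bound (l : List ℤ) (hpos : ∀ x ∈ l, 0 < x)
    (h : M l = 1) :
    ∀ x ∈ l, x ≤ (l.length : ℤ) - 5 :=
  (entryBound_of_pos l hpos).1 h
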